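/- Let d ≥ 2 and let 𝒮 be a weighted step set satisfying the standing assumptions, with A, Q, B the Laurent polynomials in z_1,…,z_{d−1} defined by A = Σ_{i∈𝒮, i_d=−1} w_i z_1^{i_1}⋯z_{d−1}^{i_{d−1}}, Q and B analogously over i_d = 0 and i_d = 1; set S̄(z) = z_d A + Q + z_d^{−1} B. For 1 ≤ j ≤ d−1 let B_j, A'_j, B'_j be the Laurent polynomials (not involving z_j; A'_j, B'_j also not involving z_d) with S̄ = (z_j + z_j^{−1})B_j + Q_j, A = (z_j + z_j^{−1})A'_j + A''_j, B = (z_j + z_j^{−1})B'_j + B''_j. Let p ∈ ℂ^d satisfy: p_j ∈ {1,−1} for 1 ≤ j ≤ d−1; p_d ∉ {0,1}; A(p) ≠ 0, B(p) ≠ 0, p_d² = B(p)/A(p); S̄(p) ≠ 0; and p_j·B_j(p) ≠ 0 for all 1 ≤ j ≤ d−1 (all Laurent polynomials evaluated at the relevant coordinates of p). Define, on a neighbourhood of 0 in ℝ^d: ũ(θ) = ∏_{j=1}^{d−1}(1 + p_j e^{iθ_j}) · (1 − p_d² e^{2iθ_d} · A(p_1e^{iθ_1},…,p_{d−1}e^{iθ_{d−1}})/B(p_1e^{iθ_1},…,p_{d−1}e^{iθ_{d−1}}))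 · (1 − p_d e^{iθ_d})^{−1}; g̃(θ) = log S̄(p) − log S̄(p_1e^{iθ_1},…,p_de^{iθ_d}) (a branch with g̃(0)=0); g̲̃ = g̃ − (1/2)θᵀ g̃''(0) θ; and the operator ℋ = −(S̄(p)/2)·( Σ_{j=1}^{d−1} (p_j B_j(p))^{−1} ∂_j² + p_d·B(p)^{−1} ∂_d² ). Then −(1/2)·( ℋ(ũ)(0) + ℋ²(ũ·g̲̃)(0)/4 ) = [ S̄(p)·∏_{j=1}^{d−1}(1+p_j) / (1−p_d) ] · [ 1/(A(p)·p_d·(1−p_d)) + Σ_{j=1}^{d−1} (1−p_j)/(2 p_j B_j(p)) · ( A'_j(p)/A(p) − B'_j(p)/B(p) ) ]. -/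

import Mathlib

open Finset

/-- The `k`-th partial derivative of a function `f : ℝ^d → ℂ`. -/
noncomputable def pderiv' (d : ℕ) (k : Fin d) (f : (Fin d → ℝ) → ℂ) :
    (Fin d → ℝ) → ℂ :=
  fun z => deriv (fun s : ℝ => f (Function.update z k s)) (z k)


/-- Near any point of an open set of smoothness the partial derivative is a directional derivative. -/
theorem pd_hasDerivAt {d : ℕ} {U : Set (Fin d → ℝ)} (hU : IsOpen U) {f : (Fin d → ℝ) → ℂ}
    (hf : ContDiffOn ℝ (⊤ : ℕ∞) f U) (k : Fin d) {x : Fin d → ℝ} (hx : x ∈ U) :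
    HasDerivAt (fun s : ℝ => f (Function.update x k s)) (fderiv ℝ f x (Pi.single k 1)) (x k) := by
  have h1 : DifferentiableAt ℝ f x :=
    (hf.contDiffAt (hU.mem_nhds hx)).differentiableAt (by simp)
  have h2 : HasDerivAt (fun s : ℝ => Function.update x k s) (Pi.single k 1) (x k) :=
    hasDerivAt_update x k (x k)
  have h3 : HasFDerivAt f (fderiv ℝ f x) (Function.update x k (x k)) := by
    rw [Function.update_eq_self]; exact h1.hasFDerivAt
  exact h3.comp_hasDerivAt (x k) h2

theorem pd_eq {d : ℕ} {U : Set (Fin d → ℝ)} (hU : IsOpen U) {f : (Fin d → ℝ) → ℂ}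
    (hf : ContDiffOn ℝ (⊤ : ℕ∞) f U) (k : Fin d) {x : Fin d → ℝ} (hx : x ∈ U) :
    pderiv' d k f x = fderiv ℝ f x (Pi.single k 1) :=
  (pd_hasDerivAt hU hf k hx).deriv

theorem pd_smooth {d : ℕ} {U : Set (Fin d → ℝ)} (hU : IsOpen U) {f : (Fin d → ℝ) → ℂ}
    (hf : ContDiffOn ℝ (⊤ : ℕ∞) f U) (k : Fin d) :
    ContDiffOn ℝ (⊤ : ℕ∞) (pderiv' d k f) U := by
  have h1 : ContDiffOn ℝ (⊤ : ℕ∞) (fderiv ℝ f) U := hf.fderiv_of_isOpen hU (by simp)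
  have h2 : ContDiffOn ℝ (⊤ : ℕ∞) (fun x => fderiv ℝ f x (Pi.single k 1)) U :=
    h1.clm_apply contDiffOn_const
  exact h2.congr (fun x hx => pd_eq hU hf k hx)

theorem pd_congr {d : ℕ} {U : Set (Fin d → ℝ)} (hU : IsOpen U) {f g : (Fin d → ℝ) → ℂ}
    (h : Set.EqOn f g U) (k : Fin d) : Set.EqOn (pderiv' d k f) (pderiv' d k g) U := by
  intro x hx
  unfold pderiv'
  apply Filter.EventuallyEq.deriv_eq
  have hc : Continuous (fun s : ℝ => Function.update x k s) := by fun_prop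
  have : ∀ᶠ s in nhds (x k), Function.update x k s ∈ U := by
    apply hc.continuousAt
    simp only [Function.update_eq_self]; exact hU.mem_nhds hx
  filter_upwards [this] with s hs using h hs

theorem pd_mul {d : ℕ} {U : Set (Fin d → ℝ)} (hU : IsOpen U) {f g : (Fin d → ℝ) → ℂ}
    (hf : ContDiffOn ℝ (⊤ : ℕ∞) f U) (hg : ContDiffOn ℝ (⊤ : ℕ∞) g U) (k : Fin d) :
    Set.EqOn (pderiv' d k (fun x => f x * g x))
      (fun x => pderiv' d k f x * g x + f x * pderiv' d k g x) U := by
  intro x hx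
  have := ((pd_hasDerivAt hU hf k hx).mul (pd_hasDerivAt hU hg k hx)).deriv
  simp only [Function.update_eq_self] at this
  simp only [pd_eq hU hf k hx, pd_eq hU hg k hx]
  exact this

theorem pd_add {d : ℕ} {U : Set (Fin d → ℝ)} (hU : IsOpen U) {f g : (Fin d → ℝ) → ℂ}
    (hf : ContDiffOn ℝ (⊤ : ℕ∞) f U) (hg : ContDiffOn ℝ (⊤ : ℕ∞) g U) (k : Fin d) :
    Set.EqOn (pderiv' d k (fun x => f x + g x))
      (fun x => pderiv' d k f x + pderiv' d k g x) U := by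
  intro x hx
  have := ((pd_hasDerivAt hU hf k hx).add (pd_hasDerivAt hU hg k hx)).deriv
  simp only [pd_eq hU hf k hx, pd_eq hU hg k hx]
  exact this

theorem pd_sub {d : ℕ} {U : Set (Fin d → ℝ)} (hU : IsOpen U) {f g : (Fin d → ℝ) → ℂ}
    (hf : ContDiffOn ℝ (⊤ : ℕ∞) f U) (hg : ContDiffOn ℝ (⊤ : ℕ∞) g U) (k : Fin d) :
    Set.EqOn (pderiv' d k (fun x => f x - g x))
      (fun x => pderiv' d k f x - pderiv' d k g x) U := by
  intro x hx
  have := ((pd_hasDerivAt hU hf k hx).sub (pd_hasDerivAt hU hg k hx)).deriv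
  simp only [pd_eq hU hf k hx, pd_eq hU hg k hx]
  exact this

theorem pd_const {d : ℕ} (c : ℂ) (k : Fin d) :
    pderiv' d k (fun _ => c) = fun _ => 0 := by
  funext x; simp [pderiv']

theorem pd_const_mul {d : ℕ} (c : ℂ) (f : (Fin d → ℝ) → ℂ) (k : Fin d) :
    pderiv' d k (fun x => c * f x) = fun x => c * pderiv' d k f x := by
  funext x
  simp only [pderiv']
  exact deriv_const_mul_field c

theorem pd_sum {d : ℕ} {ι : Type*} {U : Set (Fin d → ℝ)} (hU : IsOpen U)
    (s : Finset ι) {f : ι → (Fin d → ℝ) → ℂ}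
    (hf : ∀ i ∈ s, ContDiffOn ℝ (⊤ : ℕ∞) (f i) U) (k : Fin d) :
    Set.EqOn (pderiv' d k (fun x => ∑ i ∈ s, f i x))
      (fun x => ∑ i ∈ s, pderiv' d k (f i) x) U := by
  intro x hx
  have := (HasDerivAt.fun_sum (fun i hi => pd_hasDerivAt (x := x) hU (hf i hi) k hx)).deriv
  simp only
  rw [Finset.sum_congr rfl (fun i hi => pd_eq hU (hf i hi) k hx)]
  exact this

theorem pd_comm {d : ℕ} {U : Set (Fin d → ℝ)} (hU : IsOpen U) {f : (Fin d → ℝ) → ℂ}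
    (hf : ContDiffOn ℝ (⊤ : ℕ∞) f U) (j k : Fin d) :
    Set.EqOn (pderiv' d j (pderiv' d k f)) (pderiv' d k (pderiv' d j f)) U := by
  have key : ∀ j k : Fin d, ∀ x ∈ U, pderiv' d j (pderiv' d k f) x =
      fderiv ℝ (fderiv ℝ f) x (Pi.single j 1) (Pi.single k 1) := by
    intro j k x hx
    have h1 : ContDiffOn ℝ (⊤ : ℕ∞) (fderiv ℝ f) U := hf.fderiv_of_isOpen hU (by simp)
    have h2 : ContDiffOn ℝ (⊤ : ℕ∞) (fun x => fderiv ℝ f x (Pi.single k 1)) U :=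
      h1.clm_apply contDiffOn_const
    rw [pd_congr hU (fun x hx => pd_eq hU hf k hx) j hx, pd_eq hU h2 j hx]
    have h3 : DifferentiableAt ℝ (fderiv ℝ f) x :=
      (h1.contDiffAt (hU.mem_nhds hx)).differentiableAt (by simp)
    rw [fderiv_clm_apply h3 (differentiableAt_const _)]
    simp
  intro x hx
  rw [key j k x hx, key k j x hx]
  have hs : IsSymmSndFDerivAt ℝ f x :=
    (hf.contDiffAt (hU.mem_nhds hx)).isSymmSndFDerivAt
      (by simp only [minSmoothness_of_isRCLikeNormedField]; exact WithTop.coe_le_coe.2 le_top)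
  exact hs.eq _ _

/-- second-order product rule along one axis -/
theorem pd_mul2 {d : ℕ} {U : Set (Fin d → ℝ)} (hU : IsOpen U) {f g : (Fin d → ℝ) → ℂ}
    (hf : ContDiffOn ℝ (⊤ : ℕ∞) f U) (hg : ContDiffOn ℝ (⊤ : ℕ∞) g U) (k : Fin d) :
    Set.EqOn (pderiv' d k (pderiv' d k (fun x => f x * g x)))
      (fun x => pderiv' d k (pderiv' d k f) x * g x + 2 * (pderiv' d k f x * pderiv' d k g x)
        + f x * pderiv' d k (pderiv' d k g) x) U := by
  intro x hx
  have hf1 := pd_smooth hU hf k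
  have hg1 := pd_smooth hU hg k
  rw [pd_congr hU (pd_mul hU hf hg k) k hx, pd_add hU (hf1.mul hg) (hf.mul hg1) k hx]
  simp only
  rw [pd_mul hU hf1 hg k hx, pd_mul hU hf hg1 k hx]
  simp only
  ring

/-- fourth-order derivative of a product of functions vanishing to orders 1 and 3 -/
theorem pd_four {d : ℕ} {U : Set (Fin d → ℝ)} (hU : IsOpen U) (h0 : (0 : Fin d → ℝ) ∈ U)
    {u h : (Fin d → ℝ) → ℂ}
    (hu : ContDiffOn ℝ (⊤ : ℕ∞) u U) (hh : ContDiffOn ℝ (⊤ : ℕ∞) h U)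
    (u0 : u 0 = 0) (hh0 : h 0 = 0) (hh1 : ∀ a, pderiv' d a h 0 = 0)
    (hh2 : ∀ a b, pderiv' d a (pderiv' d b h) 0 = 0) (a b : Fin d) :
    pderiv' d a (pderiv' d a (pderiv' d b (pderiv' d b (fun x => u x * h x)))) 0 =
      2 * (pderiv' d b u 0 * pderiv' d a (pderiv' d a (pderiv' d b h)) 0)
      + 2 * (pderiv' d a u 0 * pderiv' d a (pderiv' d b (pderiv' d b h)) 0) := by
  have hub := pd_smooth hU hu b
  have hubb := pd_smooth hU hub b
  have hhb := pd_smooth hU hh b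
  have hhbb := pd_smooth hU hhb b
  have s1 : ContDiffOn ℝ (⊤ : ℕ∞) (fun x => pderiv' d b (pderiv' d b u) x * h x) U := hubb.mul hh
  have s2 : ContDiffOn ℝ (⊤ : ℕ∞) (fun x => pderiv' d b u x * pderiv' d b h x) U := hub.mul hhb
  have s2' : ContDiffOn ℝ (⊤ : ℕ∞) (fun x => 2 * (pderiv' d b u x * pderiv' d b h x)) U :=
    contDiffOn_const.mul s2
  have s3 : ContDiffOn ℝ (⊤ : ℕ∞) (fun x => u x * pderiv' d b (pderiv' d b h) x) U := hu.mul hhbb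
  have e0 := pd_congr hU (pd_congr hU (pd_mul2 hU hu hh b) a) a h0
  have e1 := pd_congr hU (pd_add hU (s1.add s2') s3 a) a h0
  have e2 := pd_add hU (pd_smooth hU (s1.add s2') a) (pd_smooth hU s3 a) a h0
  have e3 := pd_congr hU (pd_add hU s1 s2' a) a h0
  have e4 := pd_add hU (pd_smooth hU s1 a) (pd_smooth hU s2' a) a h0
  simp only at e0 e1 e2 e3 e4
  rw [e0, e1, e2, e3, e4, pd_const_mul, pd_const_mul]
  have m1 := pd_mul2 hU hubb hh a h0
  have m2 := pd_mul2 hU hub hhb a h0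
  have m3 := pd_mul2 hU hu hhbb a h0
  simp only at m1 m2 m3 ⊢
  rw [m1, m2, m3, u0, hh0, hh1, hh1, hh2, hh2, hh2]
  ring

/-- derivatives of a local logarithm at a critical point -/
theorem pd_log {d : ℕ} {U : Set (Fin d → ℝ)} (hU : IsOpen U) (h0 : (0 : Fin d → ℝ) ∈ U)
    {g s : (Fin d → ℝ) → ℂ}
    (hg : ContDiffOn ℝ (⊤ : ℕ∞) g U) (hs : ContDiffOn ℝ (⊤ : ℕ∞) s U)
    (K : ℂ) (hgs : ∀ x ∈ U, Complex.exp (g x) * s x = K) (s0 : s 0 ≠ 0)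
    (s1 : ∀ a, pderiv' d a s 0 = 0) :
    (∀ a, pderiv' d a g 0 = 0) ∧ ∀ a b c, pderiv' d c (pderiv' d b (pderiv' d a g)) 0 =
      - pderiv' d c (pderiv' d b (pderiv' d a s)) 0 / s 0 := by
  have E : ∀ a, Set.EqOn (fun x => pderiv' d a g x * s x + pderiv' d a s x) (fun _ => 0) U := by
    intro a x hx
    have hc := pd_congr hU (g := fun _ => K) hgs a hx
    rw [pd_const] at hc
    have hd := ((pd_hasDerivAt hU hg a hx).cexp.mul (pd_hasDerivAt hU hs a hx)).deriv
    simp only [Function.update_eq_self] at hd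
    rw [← pd_eq hU hg a hx, ← pd_eq hU hs a hx] at hd
    have h2 : (Complex.exp (g x)) * (pderiv' d a g x * s x + pderiv' d a s x) = 0 := by
      refine Eq.trans ?_ hc
      refine Eq.trans ?_ hd.symm
      ring
    exact (mul_eq_zero.mp h2).resolve_left (Complex.exp_ne_zero _)
  have g1 : ∀ a, pderiv' d a g 0 = 0 := by
    intro a
    have := E a h0
    simp only [s1, add_zero] at this
    exact (mul_eq_zero.mp this).resolve_right s0
  refine ⟨g1, fun a b c => ?_⟩
  have hga := pd_smooth hU hg a
  have hsa := pd_smooth hU hs a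
  have hgba := pd_smooth hU hga b
  have hsb := pd_smooth hU hs b
  have hsba := pd_smooth hU hsa b
  have E2 : Set.EqOn (fun x => (pderiv' d b (pderiv' d a g) x * s x
      + pderiv' d a g x * pderiv' d b s x) + pderiv' d b (pderiv' d a s) x) (fun _ => 0) U := by
    intro x hx
    have h1 := pd_congr hU (E a) b hx
    have h2 := pd_add hU (hga.mul hs) hsa b hx
    have h3 := pd_mul hU hga hs b hx
    rw [pd_const] at h1
    simp only at h1 h2 h3 ⊢
    rw [← h1, ← h3]
    exact h2.symm
  have h1 := pd_congr hU E2 c h0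
  have h2 := pd_add hU ((hgba.mul hs).add (hga.mul hsb)) hsba c h0
  have h3 := pd_add hU (hgba.mul hs) (hga.mul hsb) c h0
  have h4 := pd_mul hU hgba hs c h0
  have h5 := pd_mul hU hga hsb c h0
  rw [pd_const] at h1
  simp only [s1, g1] at h1 h2 h3 h4 h5
  rw [h2, h3, h4, h5] at h1
  rw [eq_div_iff s0]
  linear_combination h1

/-- subtracting the Hessian form -/
theorem pd_quad {d : ℕ} {U : Set (Fin d → ℝ)} (hU : IsOpen U) (h0 : (0 : Fin d → ℝ) ∈ U)
    {g gb : (Fin d → ℝ) → ℂ}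
    (hg : ContDiffOn ℝ (⊤ : ℕ∞) g U) (g1 : ∀ a, pderiv' d a g 0 = 0)
    (hgb : ∀ θ, gb θ = g θ -
      (1 / 2) * ∑ a : Fin d, ∑ b : Fin d,
        (θ a : ℂ) * pderiv' d a (pderiv' d b g) 0 * (θ b : ℂ)) :
    ContDiffOn ℝ (⊤ : ℕ∞) gb U ∧ (∀ a, pderiv' d a gb 0 = 0) ∧
    (∀ a b, pderiv' d a (pderiv' d b gb) 0 = 0) ∧
    (∀ a b c, pderiv' d c (pderiv' d b (pderiv' d a gb)) 0 =
      pderiv' d c (pderiv' d b (pderiv' d a g)) 0) := by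
  set H : Fin d → Fin d → ℂ := fun a b => pderiv' d a (pderiv' d b g) 0 with hH
  have Hs : ∀ a b, H a b = H b a := fun a b => pd_comm hU hg a b h0
  have sc : ∀ a : Fin d, ContDiffOn ℝ (⊤ : ℕ∞) (fun θ : Fin d → ℝ => (θ a : ℂ)) U := by
    intro a
    exact (Complex.ofRealCLM.contDiff.comp (contDiff_apply ℝ ℝ a)).contDiffOn
  have dc : ∀ a c : Fin d, pderiv' d c (fun θ : Fin d → ℝ => (θ a : ℂ)) =
      fun _ => if a = c then 1 else 0 := by
    intro a c
    funext x
    unfold pderiv'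
    split_ifs with h
    · subst h
      simp only [Function.update_self]
      exact (Complex.ofRealCLM.hasDerivAt (x := x a)).deriv
    · simp [Function.update_of_ne h]
  let q : (Fin d → ℝ) → ℂ := fun θ => (1 / 2) * ∑ a : Fin d, ∑ b : Fin d, (θ a : ℂ) * H a b * (θ b : ℂ)
  have sm : ∀ a b, ContDiffOn ℝ (⊤ : ℕ∞) (fun θ : Fin d → ℝ => (θ a : ℂ) * H a b * (θ b : ℂ)) U :=
    fun a b => ((sc a).mul contDiffOn_const).mul (sc b)
  have ss : ∀ a, ContDiffOn ℝ (⊤ : ℕ∞) (fun θ : Fin d → ℝ => ∑ b, (θ a : ℂ) * H a b * (θ b : ℂ)) U :=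
    fun a => ContDiffOn.sum (fun b _ => sm a b)
  have sq : ContDiffOn ℝ (⊤ : ℕ∞) q U :=
    contDiffOn_const.mul (ContDiffOn.sum (fun a _ => ss a))
  have gbe : gb = fun θ => g θ - q θ := funext hgb
  have q1 : ∀ c, Set.EqOn (pderiv' d c q) (fun θ => ∑ b, H c b * (θ b : ℂ)) U := by
    intro c x hx
    simp only [q]
    rw [pd_const_mul]
    simp only
    rw [pd_sum hU _ (fun a _ => ss a) c hx]
    simp only
    have : ∀ a, pderiv' d c (fun θ : Fin d → ℝ => ∑ b, (θ a : ℂ) * H a b * (θ b : ℂ)) x =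
        ∑ b, ((if a = c then 1 else 0) * H a b * (x b : ℂ) + (x a : ℂ) * H a b * (if b = c then 1 else 0)) := by
      intro a
      rw [pd_sum hU _ (fun b _ => sm a b) c hx]
      refine Finset.sum_congr rfl (fun b _ => ?_)
      rw [pd_mul hU ((sc a).mul contDiffOn_const) (sc b) c hx]
      simp only
      rw [pd_mul hU (sc a) contDiffOn_const c hx, dc, dc, pd_const]
      simp
    simp only [this, Finset.sum_add_distrib]
    simp only [mul_ite, mul_one, mul_zero, ite_mul, one_mul, zero_mul, Finset.sum_ite_eq',
      Finset.mem_univ, if_true]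
    rw [Finset.sum_comm]
    simp only [Finset.sum_ite_eq', Finset.mem_univ, if_true]
    have : ∑ a, (x a : ℂ) * H a c = ∑ b, H c b * (x b : ℂ) :=
      Finset.sum_congr rfl (fun a _ => by rw [Hs a c]; ring)
    rw [this]; ring
  have sl : ∀ c b, ContDiffOn ℝ (⊤ : ℕ∞) (fun θ : Fin d → ℝ => H c b * (θ b : ℂ)) U :=
    fun c b => contDiffOn_const.mul (sc b)
  have q2 : ∀ e c, Set.EqOn (pderiv' d e (pderiv' d c q)) (fun _ => H c e) U := by
    intro e c x hx
    rw [pd_congr hU (q1 c) e hx, pd_sum hU _ (fun b _ => sl c b) e hx]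
    simp only [pd_const_mul, dc]
    simp
  have q3 : ∀ k e c, Set.EqOn (pderiv' d k (pderiv' d e (pderiv' d c q))) (fun _ => 0) U := by
    intro k e c x hx
    rw [pd_congr hU (q2 e c) k hx, pd_const]
  have d1 : ∀ a, Set.EqOn (pderiv' d a gb) (fun x => pderiv' d a g x - pderiv' d a q x) U := by
    intro a; rw [gbe]; exact pd_sub hU hg sq a
  have d2 : ∀ b a, Set.EqOn (pderiv' d b (pderiv' d a gb))
      (fun x => pderiv' d b (pderiv' d a g) x - pderiv' d b (pderiv' d a q) x) U := by
    intro b a x hx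
    rw [pd_congr hU (d1 a) b hx, pd_sub hU (pd_smooth hU hg a) (pd_smooth hU sq a) b hx]
  refine ⟨by rw [gbe]; exact hg.sub sq, fun a => ?_, fun a b => ?_, fun a b c => ?_⟩
  · rw [d1 a h0]; simp only; rw [q1 a h0, g1]; simp
  · rw [d2 a b h0]; simp only; rw [q2 a b h0]; simp only; rw [Hs b a]; simp [hH]
  · rw [pd_congr hU (d2 b a) c h0, pd_sub hU (pd_smooth hU (pd_smooth hU hg a) b)
      (pd_smooth hU (pd_smooth hU sq a) b) c h0]
    simp only
    rw [q3 c b a h0, sub_zero]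

theorem pd_even {d : ℕ} {f : (Fin d → ℝ) → ℂ} {j : Fin d}
    (h : ∀ s : ℝ, f (Function.update 0 j (-s)) = f (Function.update 0 j s)) :
    pderiv' d j f 0 = 0 := by
  unfold pderiv'
  have h1 := deriv_comp_neg (fun s : ℝ => f (Function.update 0 j s)) 0
  simp only [h, neg_zero] at h1
  simp only [Pi.zero_apply]
  exact self_eq_neg.mp h1

theorem pd_indep {d : ℕ} {f : (Fin d → ℝ) → ℂ} {j : Fin d}
    (h : ∀ x (s : ℝ), f (Function.update x j s) = f x) :
    pderiv' d j f = fun _ => 0 := by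
  funext x
  simp [pderiv', h]

/-- a factor with vanishing partial derivative can be pulled out -/
theorem pd_pull {d : ℕ} {U : Set (Fin d → ℝ)} (hU : IsOpen U) {f g : (Fin d → ℝ) → ℂ}
    (hf : ContDiffOn ℝ (⊤ : ℕ∞) f U) (hg : ContDiffOn ℝ (⊤ : ℕ∞) g U) (k : Fin d)
    (hz : ∀ x ∈ U, pderiv' d k f x = 0) :
    Set.EqOn (pderiv' d k (fun x => f x * g x)) (fun x => f x * pderiv' d k g x) U := by
  intro x hx
  rw [pd_mul hU hf hg k hx]
  simp [hz x hx]

theorem core {d : ℕ} (n : Fin d) (J : Finset (Fin d)) (hnJ : n ∉ J) (hJ : insert n J = univ)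
    {U : Set (Fin d → ℝ)} (hU : IsOpen U) (h0 : (0 : Fin d → ℝ) ∈ U)
    {a b q e ei P F g gb : (Fin d → ℝ) → ℂ}
    (ha : ContDiffOn ℝ (⊤ : ℕ∞) a U) (hb : ContDiffOn ℝ (⊤ : ℕ∞) b U)
    (hq : ContDiffOn ℝ (⊤ : ℕ∞) q U) (he : ContDiffOn ℝ (⊤ : ℕ∞) e U)
    (hei : ContDiffOn ℝ (⊤ : ℕ∞) ei U)
    (hF : ContDiffOn ℝ (⊤ : ℕ∞) F U) (hg : ContDiffOn ℝ (⊤ : ℕ∞) g U)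
    (an : pderiv' d n a = fun _ => 0) (bn : pderiv' d n b = fun _ => 0)
    (qn : pderiv' d n q = fun _ => 0) (Pn : pderiv' d n P = fun _ => 0)
    (en : pderiv' d n e = fun x => Complex.I * e x)
    (ein : pderiv' d n ei = fun x => -Complex.I * ei x)
    (ej : ∀ j ∈ J, ∀ x ∈ U, pderiv' d j e x = 0) (eij : ∀ j ∈ J, ∀ x ∈ U, pderiv' d j ei x = 0)
    (aj : ∀ j ∈ J, pderiv' d j a 0 = 0) (bj : ∀ j ∈ J, pderiv' d j b 0 = 0)
    (s : (Fin d → ℝ) → ℂ) (hs : s = fun x => e x * a x + q x + ei x * b x)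
    (sj : ∀ j ∈ J, pderiv' d j s 0 = 0)
    (hee : e 0 * ei 0 = 1) (hab : e 0 ^ 2 * a 0 = b 0) (hb0 : b 0 ≠ 0)
    (he1 : 1 - e 0 ≠ 0) (s0 : s 0 ≠ 0)
    (hFP : ∀ x ∈ U, b x * (F x * (1 - e x)) = P x)
    (u : (Fin d → ℝ) → ℂ) (hu : ∀ x ∈ U, u x = (b x - e x * e x * a x) * F x)
    (K : ℂ) (hgs : ∀ x ∈ U, Complex.exp (g x) * s x = K) (g0 : g 0 = 0)
    (hgb : ∀ θ, gb θ = g θ -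
      (1 / 2) * ∑ a : Fin d, ∑ b : Fin d,
        (θ a : ℂ) * pderiv' d a (pderiv' d b g) 0 * (θ b : ℂ))
    (c : Fin d → ℂ) (hc : c n = -(s 0 / 2) * (e 0 * (b 0)⁻¹)) :
    (∑ k, c k * pderiv' d k (pderiv' d k u) 0) +
      (∑ k, c k * pderiv' d k (pderiv' d k
        (fun z => ∑ l, c l * pderiv' d l (pderiv' d l (fun x => u x * gb x)) z)) 0) / 4
      = -2 * s 0 * e 0 * F 0 / (1 - e 0) := by
  have hea : ContDiffOn ℝ (⊤ : ℕ∞) (fun x => e x * a x) U := he.mul ha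
  have heib : ContDiffOn ℝ (⊤ : ℕ∞) (fun x => ei x * b x) U := hei.mul hb
  have hs' : ContDiffOn ℝ (⊤ : ℕ∞) s U := by rw [hs]; exact (hea.add hq).add heib
  have hee' : ContDiffOn ℝ (⊤ : ℕ∞) (fun x => e x * e x) U := he.mul he
  have heea : ContDiffOn ℝ (⊤ : ℕ∞) (fun x => e x * e x * a x) U := hee'.mul ha
  have hT : ContDiffOn ℝ (⊤ : ℕ∞) (fun x => b x - e x * e x * a x) U := hb.sub heea
  have hu' : ContDiffOn ℝ (⊤ : ℕ∞) u U := (hT.mul hF).congr hu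
  have e0 : e 0 ≠ 0 := left_ne_zero_of_mul_eq_one hee
  have hei0 : ei 0 = (e 0)⁻¹ := eq_inv_of_mul_eq_one_right hee
  -- derivatives of e * a and ei * b along the last axis
  have ean : Set.EqOn (pderiv' d n (fun x => e x * a x)) (fun x => Complex.I * (e x * a x)) U := by
    intro x hx
    rw [pd_mul hU he ha n hx, en, an]; simp only; ring
  have eibn : Set.EqOn (pderiv' d n (fun x => ei x * b x))
      (fun x => -Complex.I * (ei x * b x)) U := by
    intro x hx
    rw [pd_mul hU hei hb n hx, ein, bn]; simp only; ring
  have sn : Set.EqOn (pderiv' d n s)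
      (fun x => Complex.I * (e x * a x) + -Complex.I * (ei x * b x)) U := by
    intro x hx
    rw [hs, pd_add hU (hea.add hq) heib n hx]
    simp only
    rw [pd_add hU hea hq n hx]
    simp only
    rw [ean hx, eibn hx, qn]
    simp
  have hIea : ContDiffOn ℝ (⊤ : ℕ∞) (fun x => Complex.I * (e x * a x)) U := contDiffOn_const.mul hea
  have hIeib : ContDiffOn ℝ (⊤ : ℕ∞) (fun x => -Complex.I * (ei x * b x)) U :=
    contDiffOn_const.mul heib
  have sn1 : ∀ k, Set.EqOn (pderiv' d k (pderiv' d n s))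
      (fun x => Complex.I * pderiv' d k (fun x => e x * a x) x
        + -Complex.I * pderiv' d k (fun x => ei x * b x) x) U := by
    intro k x hx
    rw [pd_congr hU sn k hx, pd_add hU hIea hIeib k hx, pd_const_mul, pd_const_mul]
  have sn2 : ∀ k, pderiv' d k (pderiv' d k (pderiv' d n s)) 0 =
      Complex.I * pderiv' d k (pderiv' d k (fun x => e x * a x)) 0
        + -Complex.I * pderiv' d k (pderiv' d k (fun x => ei x * b x)) 0 := by
    intro k
    rw [pd_congr hU (sn1 k) k h0, pd_add hU (contDiffOn_const.mul (pd_smooth hU hea k))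
      (contDiffOn_const.mul (pd_smooth hU heib k)) k h0, pd_const_mul, pd_const_mul]
  have snn0 : pderiv' d n (pderiv' d n (pderiv' d n s)) 0 = 0 := by
    rw [sn2, pd_congr hU ean n h0, pd_congr hU eibn n h0, pd_const_mul, pd_const_mul]
    simp only
    rw [ean h0, eibn h0]
    simp only
    rw [hei0, ← hab]
    field_simp
    ring
  have snj : ∀ j ∈ J, pderiv' d j (pderiv' d j (pderiv' d n s)) 0 =
      Complex.I * (e 0 * pderiv' d j (pderiv' d j a) 0)
        + -Complex.I * (ei 0 * pderiv' d j (pderiv' d j b) 0) := by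
    intro j hj
    rw [sn2, pd_congr hU (pd_pull hU he ha j (ej j hj)) j h0,
      pd_congr hU (pd_pull hU hei hb j (eij j hj)) j h0,
      pd_pull hU he (pd_smooth hU ha j) j (ej j hj) h0,
      pd_pull hU hei (pd_smooth hU hb j) j (eij j hj) h0]
  have sn0 : pderiv' d n s 0 = 0 := by
    rw [sn h0]; simp only; rw [hei0, ← hab]; field_simp; ring
  have mem : ∀ k, k = n ∨ k ∈ J := by
    intro k; rw [← Finset.mem_insert, hJ]; exact Finset.mem_univ k
  have s1 : ∀ k, pderiv' d k s 0 = 0 := by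
    intro k
    rcases mem k with h | h
    · rw [h, sn0]
    · exact sj k h
  obtain ⟨g1, g3⟩ := pd_log hU h0 hg hs' K hgs s0 s1
  obtain ⟨hgb', gb1, gb2, gb3⟩ := pd_quad hU h0 hg g1 hgb
  have gb0 : gb 0 = 0 := by rw [hgb]; simp [g0]
  -- derivatives of T
  have Tn : Set.EqOn (pderiv' d n (fun x => b x - e x * e x * a x))
      (fun x => -(2 * Complex.I) * (e x * e x * a x)) U := by
    intro x hx
    rw [pd_sub hU hb heea n hx]
    simp only
    rw [pd_mul hU hee' ha n hx]
    simp only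
    rw [pd_mul hU he he n hx, en, an, bn]
    simp only; ring
  have Tnn : pderiv' d n (pderiv' d n (fun x => b x - e x * e x * a x)) 0 = 4 * b 0 := by
    rw [pd_congr hU Tn n h0, pd_const_mul]
    simp only
    rw [pd_mul hU hee' ha n h0]
    simp only
    rw [pd_mul hU he he n h0, en, an, ← hab]
    simp only
    linear_combination (-4 * e 0 ^ 2 * a 0) * Complex.I_sq
  have Tj : ∀ j ∈ J, Set.EqOn (pderiv' d j (fun x => b x - e x * e x * a x))
      (fun x => pderiv' d j b x - e x * e x * pderiv' d j a x) U := by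
    intro j hj x hx
    have hz : ∀ x ∈ U, pderiv' d j (fun x => e x * e x) x = 0 := by
      intro x hx
      rw [pd_pull hU he he j (ej j hj) hx]
      simp [ej j hj x hx]
    rw [pd_sub hU hb heea j hx]
    simp only
    rw [pd_pull hU hee' ha j hz hx]
  have Tjj : ∀ j ∈ J, pderiv' d j (pderiv' d j (fun x => b x - e x * e x * a x)) 0 =
      pderiv' d j (pderiv' d j b) 0 - e 0 * e 0 * pderiv' d j (pderiv' d j a) 0 := by
    intro j hj
    have hz : ∀ x ∈ U, pderiv' d j (fun x => e x * e x) x = 0 := by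
      intro x hx
      rw [pd_pull hU he he j (ej j hj) hx]
      simp [ej j hj x hx]
    rw [pd_congr hU (Tj j hj) j h0, pd_sub hU (pd_smooth hU hb j)
      (hee'.mul (pd_smooth hU ha j)) j h0]
    simp only
    rw [pd_pull hU hee' (pd_smooth hU ha j) j hz h0]
  have T0 : b 0 - e 0 * e 0 * a 0 = 0 := by rw [← hab]; ring
  -- derivative of F along the last axis
  have h1e : ContDiffOn ℝ (⊤ : ℕ∞) (fun x => 1 - e x) U := contDiffOn_const.sub he
  have Fn : pderiv' d n F 0 = Complex.I * e 0 * F 0 / (1 - e 0) := by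
    have h1 := pd_congr hU hFP n h0
    rw [pd_pull hU hb (hF.mul h1e) n (fun x _ => by rw [bn]) h0, Pn] at h1
    simp only at h1
    have h2 := (mul_eq_zero.mp h1).resolve_left hb0
    rw [pd_mul hU hF h1e n h0] at h2
    simp only at h2
    rw [pd_sub hU contDiffOn_const he n h0, pd_const, en] at h2
    simp only at h2
    rw [eq_div_iff he1]
    linear_combination h2
  -- derivatives of u
  have un : pderiv' d n u 0 = -(2 * Complex.I) * b 0 * F 0 := by
    rw [pd_congr hU hu n h0, pd_mul hU hT hF n h0]
    simp only
    rw [Tn h0, T0]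
    simp only
    rw [← hab]; ring
  have uj : ∀ j ∈ J, pderiv' d j u 0 = 0 := by
    intro j hj
    rw [pd_congr hU hu j h0, pd_mul hU hT hF j h0]
    simp only
    rw [Tj j hj h0, T0]
    simp only
    rw [aj j hj, bj j hj]; ring
  have unn : pderiv' d n (pderiv' d n u) 0 = 4 * b 0 * F 0 / (1 - e 0) := by
    rw [pd_congr hU (pd_congr hU hu n) n h0, pd_mul2 hU hT hF n h0]
    simp only
    rw [Tn h0, T0, Tnn, Fn]
    simp only
    rw [← hab]
    field_simp
    linear_combination (-4 * e 0 ^ 3 * a 0 * F 0) * Complex.I_sq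
  have ujj : ∀ j ∈ J, pderiv' d j (pderiv' d j u) 0 =
      (pderiv' d j (pderiv' d j b) 0 - e 0 * e 0 * pderiv' d j (pderiv' d j a) 0) * F 0 := by
    intro j hj
    rw [pd_congr hU (pd_congr hU hu j) j h0, pd_mul2 hU hT hF j h0]
    simp only
    rw [Tj j hj h0, T0, Tjj j hj]
    simp only
    rw [aj j hj, bj j hj]; ring
  have u0 : u 0 = 0 := by rw [hu 0 h0, T0, zero_mul]
  have uk : ∀ k, pderiv' d k u 0 = if k = n then pderiv' d n u 0 else 0 := by
    intro k
    split_ifs with h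
    · rw [h]
    · exact uj k ((mem k).resolve_left h)
  -- the fourth order part
  have huh : ContDiffOn ℝ (⊤ : ℕ∞) (fun x => u x * gb x) U := hu'.mul hgb'
  have four : ∀ k, pderiv' d k (pderiv' d k
        (fun z => ∑ l, c l * pderiv' d l (pderiv' d l (fun x => u x * gb x)) z)) 0 =
      ∑ l, c l * pderiv' d k (pderiv' d k (pderiv' d l (pderiv' d l (fun x => u x * gb x)))) 0 := by
    intro k
    have hl : ∀ l, ContDiffOn ℝ (⊤ : ℕ∞) (pderiv' d l (pderiv' d l (fun x => u x * gb x))) U :=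
      fun l => pd_smooth hU (pd_smooth hU huh l) l
    have h1 : Set.EqOn (pderiv' d k
        (fun z => ∑ l, c l * pderiv' d l (pderiv' d l (fun x => u x * gb x)) z))
        (fun z => ∑ l, c l * pderiv' d k (pderiv' d l (pderiv' d l (fun x => u x * gb x))) z) U := by
      intro x hx
      rw [pd_sum hU _ (fun l _ => contDiffOn_const.mul (hl l)) k hx]
      simp only [pd_const_mul]
    rw [pd_congr hU h1 k h0,
      pd_sum hU _ (fun l _ => contDiffOn_const.mul (pd_smooth hU (hl l) k)) k h0]
    simp only [pd_const_mul]
  have comm3 : ∀ l, pderiv' d n (pderiv' d l (pderiv' d l g)) 0 =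
      pderiv' d l (pderiv' d l (pderiv' d n g)) 0 := by
    intro l
    rw [pd_comm hU (pd_smooth hU hg l) n l h0, pd_congr hU (pd_comm hU hg n l) l h0]
  have four' : ∀ k l, pderiv' d k (pderiv' d k (pderiv' d l (pderiv' d l (fun x => u x * gb x)))) 0
      = (if l = n then 2 * pderiv' d n u 0 * pderiv' d k (pderiv' d k (pderiv' d n g)) 0 else 0)
      + (if k = n then 2 * pderiv' d n u 0 * pderiv' d l (pderiv' d l (pderiv' d n g)) 0 else 0) := by
    intro k l
    rw [pd_four hU h0 hu' hgb' u0 gb0 gb1 gb2 k l, gb3, gb3, uk k, uk l]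
    congr 1
    · split_ifs with h
      · rw [h]; ring
      · ring
    · split_ifs with h
      · rw [h, comm3]; ring
      · ring
  have tot : (∑ k, c k * pderiv' d k (pderiv' d k
        (fun z => ∑ l, c l * pderiv' d l (pderiv' d l (fun x => u x * gb x)) z)) 0) / 4 =
      c n * pderiv' d n u 0 * ∑ k, c k * pderiv' d k (pderiv' d k (pderiv' d n g)) 0 := by
    simp only [four, four', mul_add, Finset.sum_add_distrib, mul_ite, mul_zero,
      Finset.sum_ite_eq', Finset.mem_univ, if_true]
    have h1 : ∀ k, (∑ l, if k = n then c l * (2 * pderiv' d n u 0 *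
        pderiv' d l (pderiv' d l (pderiv' d n g)) 0) else 0) =
        if k = n then ∑ l, c l * (2 * pderiv' d n u 0 *
        pderiv' d l (pderiv' d l (pderiv' d n g)) 0) else 0 := by
      intro k; split_ifs <;> simp
    simp only [h1, mul_ite, mul_zero, Finset.sum_ite_eq', Finset.mem_univ, if_true]
    simp only [Finset.mul_sum]
    rw [← Finset.sum_add_distrib, Finset.sum_div]
    refine Finset.sum_congr rfl (fun k _ => ?_)
    ring
  rw [tot, ← hJ, Finset.sum_insert hnJ, Finset.sum_insert hnJ, unn, un, g3 n n n, snn0]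
  have hcan : c n * (-(2 * Complex.I) * b 0 * F 0) = Complex.I * s 0 * e 0 * F 0 := by
    rw [hc]; field_simp
  rw [hcan, hc]
  have hsum : Complex.I * s 0 * e 0 * F 0 * ∑ k ∈ J, c k * pderiv' d k (pderiv' d k (pderiv' d n g)) 0
      = - ∑ k ∈ J, c k * pderiv' d k (pderiv' d k u) 0 := by
    rw [Finset.mul_sum, ← Finset.sum_neg_distrib]
    refine Finset.sum_congr rfl (fun j hj => ?_)
    rw [ujj j hj, g3 n j j, snj j hj, hei0]
    field_simp
    linear_combination (F 0 * c j * (e 0 ^ 2 * pderiv' d j (pderiv' d j a) 0 - pderiv' d j (pderiv' d j b) 0)) * (-Complex.I_sq)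
  rw [neg_zero, zero_div, mul_zero, zero_add, hsum]
  field_simp
  ring

/-- Laurent polynomial functions in the first coordinates, along the torus through `p`. -/
theorem laurent_facts {d : ℕ} (n : Fin d) (J : Finset (Fin d)) (hnJ : n ∉ J)
    (T : Finset (Fin d → ℤ)) (w : (Fin d → ℤ) → ℝ) (p : Fin d → ℂ)
    (L : (Fin d → ℂ) → ℂ) (hL : ∀ z, L z = ∑ i ∈ T, (w i : ℂ) * ∏ k ∈ J, z k ^ (i k)) :
    ContDiff ℝ (⊤ : ℕ∞) (fun θ : Fin d → ℝ => L (fun k => p k * Complex.exp (Complex.I * (θ k : ℂ))))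
    ∧ pderiv' d n (fun θ : Fin d → ℝ => L (fun k => p k * Complex.exp (Complex.I * (θ k : ℂ))))
      = fun _ => 0 := by
  constructor
  · simp only [hL, mul_zpow, ← Complex.exp_int_mul]
    refine ContDiff.sum (fun i _ => contDiff_const.mul (contDiff_prod (fun k _ => ?_)))
    refine contDiff_const.mul ?_
    have : ContDiff ℝ (⊤ : ℕ∞) (fun θ : Fin d → ℝ => (θ k : ℂ)) :=
      Complex.ofRealCLM.contDiff.comp (contDiff_apply ℝ ℝ k)
    exact (contDiff_const.mul (contDiff_const.mul this)).cexp
  · apply pd_indep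
    intro x s
    simp only [hL]
    refine Finset.sum_congr rfl (fun i _ => ?_)
    congr 1
    refine Finset.prod_congr rfl (fun k hk => ?_)
    have : k ≠ n := fun h => hnJ (h ▸ hk)
    rw [Function.update_of_ne this]

theorem even_facts {d : ℕ} (j : Fin d) (p : Fin d → ℂ) (hp0 : ∀ k, p k ≠ 0)
    (hpj : p j = 1 ∨ p j = -1) (L L1 L2 : (Fin d → ℂ) → ℂ)
    (h1 : ∀ z c, L1 (Function.update z j c) = L1 z)
    (h2 : ∀ z c, L2 (Function.update z j c) = L2 z)
    (hL : ∀ z : Fin d → ℂ, (∀ k, z k ≠ 0) → L z = (z j + (z j)⁻¹) * L1 z + L2 z) :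
    pderiv' d j (fun θ : Fin d → ℝ => L (fun k => p k * Complex.exp (Complex.I * (θ k : ℂ)))) 0
      = 0 := by
  have key : ∀ s : ℝ, L (fun k => p k * Complex.exp (Complex.I *
      ((Function.update (0 : Fin d → ℝ) j s) k : ℂ))) =
      (p j * (Complex.exp (Complex.I * s) + Complex.exp (-(Complex.I * s)))) * L1 p + L2 p := by
    intro s
    have e1 : (fun k => p k * Complex.exp (Complex.I *
      ((Function.update (0 : Fin d → ℝ) j s) k : ℂ))) =
      Function.update p j (p j * Complex.exp (Complex.I * s)) := by
      funext k
      by_cases h : k = j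
      · subst h; simp
      · simp [Function.update_of_ne h]
    rw [e1, hL, h1, h2, Function.update_self, mul_inv, ← Complex.exp_neg]
    · have : (p j)⁻¹ = p j := by rcases hpj with h | h <;> rw [h] <;> norm_num
      rw [this]; ring
    · intro k
      by_cases h : k = j
      · subst h; simp [hp0]
      · simp [Function.update_of_ne h, hp0]
  apply pd_even
  intro s
  rw [key, key]
  push_cast
  simp only [mul_neg, neg_neg]
  ring

theorem pd_exp {d : ℕ} (n : Fin d) (c κ : ℂ) :
    pderiv' d n (fun θ : Fin d → ℝ => c * Complex.exp (κ * (θ n : ℂ))) =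
      fun θ => κ * (c * Complex.exp (κ * (θ n : ℂ))) := by
  funext x
  unfold pderiv'
  simp only [Function.update_self]
  have h1 : HasDerivAt (fun s : ℝ => (s : ℂ)) 1 (x n) := Complex.ofRealCLM.hasDerivAt
  rw [(((h1.const_mul κ).cexp).const_mul c).deriv]
  ring

theorem sm_exp {d : ℕ} (n : Fin d) (c κ : ℂ) :
    ContDiff ℝ (⊤ : ℕ∞) (fun θ : Fin d → ℝ => c * Complex.exp (κ * (θ n : ℂ))) := by
  have : ContDiff ℝ (⊤ : ℕ∞) (fun θ : Fin d → ℝ => (θ n : ℂ)) :=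
    Complex.ofRealCLM.contDiff.comp (contDiff_apply ℝ ℝ n)
  exact contDiff_const.mul (contDiff_const.mul this).cexp

theorem negative_drift_constant_simplification
    (d : ℕ) (hd : 2 ≤ d)
    (S : Finset (Fin d → ℤ)) (w : (Fin d → ℤ) → ℝ)
    -- steps lie in {-1,0,1}^d \ {0}
    (hSsmall : ∀ i ∈ S, (∀ m : Fin d, i m = -1 ∨ i m = 0 ∨ i m = 1) ∧ i ≠ 0)
    -- nonnegative weights
    (hw : ∀ i ∈ S, 0 ≤ w i)
    -- symmetry of the weighting over each of the first d-1 axes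
    (hsym : ∀ j : Fin d, (j : ℕ) < d - 1 → ∀ i ∈ S,
      Function.update i j (-(i j)) ∈ S ∧ w (Function.update i j (-(i j))) = w i)
    -- a positively weighted step forwards and backwards in each coordinate
    (hfb : ∀ j : Fin d, (∃ i ∈ S, i j = 1 ∧ 0 < w i) ∧ (∃ i ∈ S, i j = -1 ∧ 0 < w i))
    -- the Laurent polynomial functions A, Q, B in z_1, …, z_{d-1}
    (AC QC BC : (Fin d → ℂ) → ℂ)
    (hAC : ∀ z, AC z = ∑ i ∈ S.filter (fun i => i ⟨d - 1, by omega⟩ = -1),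
      (w i : ℂ) * ∏ k ∈ Finset.univ.filter (fun k : Fin d => (k : ℕ) < d - 1), z k ^ (i k))
    (hQC : ∀ z, QC z = ∑ i ∈ S.filter (fun i => i ⟨d - 1, by omega⟩ = 0),
      (w i : ℂ) * ∏ k ∈ Finset.univ.filter (fun k : Fin d => (k : ℕ) < d - 1), z k ^ (i k))
    (hBC : ∀ z, BC z = ∑ i ∈ S.filter (fun i => i ⟨d - 1, by omega⟩ = 1),
      (w i : ℂ) * ∏ k ∈ Finset.univ.filter (fun k : Fin d => (k : ℕ) < d - 1), z k ^ (i k))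
    -- S̄(z) = z_d A + Q + z_d⁻¹ B
    (Sbar : (Fin d → ℂ) → ℂ)
    (hSbar : ∀ z, Sbar z =
      z ⟨d - 1, by omega⟩ * AC z + QC z + (z ⟨d - 1, by omega⟩)⁻¹ * BC z)
    -- B_j with S̄ = (z_j + z_j⁻¹) B_j + Q_j, B_j and Q_j not involving z_j
    (Bj Qj : Fin d → ((Fin d → ℂ) → ℂ))
    (hBjind : ∀ j : Fin d, (j : ℕ) < d - 1 → ∀ z c,
      Bj j (Function.update z j c) = Bj j z)
    (hQjind : ∀ j : Fin d, (j : ℕ) < d - 1 → ∀ z c,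
      Qj j (Function.update z j c) = Qj j z)
    (hBjQj : ∀ j : Fin d, (j : ℕ) < d - 1 → ∀ z : Fin d → ℂ, (∀ k, z k ≠ 0) →
      Sbar z = (z j + (z j)⁻¹) * Bj j z + Qj j z)
    -- A'_j, A''_j, B'_j, B''_j, not involving z_j or z_d
    (A' A'' B' B'' : Fin d → ((Fin d → ℂ) → ℂ))
    (hA'ind : ∀ j : Fin d, (j : ℕ) < d - 1 → ∀ z c,
      A' j (Function.update z j c) = A' j z ∧
      A' j (Function.update z ⟨d - 1, by omega⟩ c) = A' j z)
    (hA''ind : ∀ j : Fin d, (j : ℕ) < d - 1 → ∀ z c,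
      A'' j (Function.update z j c) = A'' j z ∧
      A'' j (Function.update z ⟨d - 1, by omega⟩ c) = A'' j z)
    (hB'ind : ∀ j : Fin d, (j : ℕ) < d - 1 → ∀ z c,
      B' j (Function.update z j c) = B' j z ∧
      B' j (Function.update z ⟨d - 1, by omega⟩ c) = B' j z)
    (hB''ind : ∀ j : Fin d, (j : ℕ) < d - 1 → ∀ z c,
      B'' j (Function.update z j c) = B'' j z ∧
      B'' j (Function.update z ⟨d - 1, by omega⟩ c) = B'' j z)
    (hAdec : ∀ j : Fin d, (j : ℕ) < d - 1 → ∀ z : Fin d → ℂ, (∀ k, z k ≠ 0) →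
      AC z = (z j + (z j)⁻¹) * A' j z + A'' j z)
    (hBdec : ∀ j : Fin d, (j : ℕ) < d - 1 → ∀ z : Fin d → ℂ, (∀ k, z k ≠ 0) →
      BC z = (z j + (z j)⁻¹) * B' j z + B'' j z)
    -- the point p
    (p : Fin d → ℂ)
    (hpj : ∀ j : Fin d, (j : ℕ) < d - 1 → (p j = 1 ∨ p j = -1))
    (hpd0 : p ⟨d - 1, by omega⟩ ≠ 0) (hpd1 : p ⟨d - 1, by omega⟩ ≠ 1)
    (hpA : AC p ≠ 0) (hpB : BC p ≠ 0)
    (hpd : (p ⟨d - 1, by omega⟩) ^ 2 = BC p / AC p)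
    (hpS : Sbar p ≠ 0)
    (hpBj : ∀ j : Fin d, (j : ℕ) < d - 1 → p j * Bj j p ≠ 0)
    -- the function ũ
    (ut : (Fin d → ℝ) → ℂ)
    (hut : ∀ θ : Fin d → ℝ, ut θ =
      (∏ j ∈ Finset.univ.filter (fun j : Fin d => (j : ℕ) < d - 1),
        (1 + p j * Complex.exp (Complex.I * (θ j : ℂ)))) *
      (1 - (p ⟨d - 1, by omega⟩) ^ 2 *
          Complex.exp (2 * Complex.I * (θ ⟨d - 1, by omega⟩ : ℂ)) *
          AC (fun k => p k * Complex.exp (Complex.I * (θ k : ℂ))) /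
          BC (fun k => p k * Complex.exp (Complex.I * (θ k : ℂ)))) *
      (1 - p ⟨d - 1, by omega⟩ * Complex.exp (Complex.I * (θ ⟨d - 1, by omega⟩ : ℂ)))⁻¹)
    -- the function g̃: a branch of log S̄(p) - log S̄(p e^{iθ}) with g̃(0) = 0
    (U : Set (Fin d → ℝ)) (hU : IsOpen U) (h0 : (0 : Fin d → ℝ) ∈ U)
    (gt : (Fin d → ℝ) → ℂ)
    (hgt0 : gt 0 = 0)
    (hgtsm : ContDiffOn ℝ (⊤ : ℕ∞) gt U)
    (hgt : ∀ θ ∈ U, Complex.exp (gt θ) *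
      Sbar (fun k => p k * Complex.exp (Complex.I * (θ k : ℂ))) = Sbar p)
    -- g̲̃(θ) = g̃(θ) - (1/2) θᵀ g̃''(0) θ
    (gbar : (Fin d → ℝ) → ℂ)
    (hgbar : ∀ θ, gbar θ = gt θ -
      (1 / 2) * ∑ a : Fin d, ∑ b : Fin d,
        (θ a : ℂ) * pderiv' d a (pderiv' d b gt) 0 * (θ b : ℂ))
    -- the operator ℋ
    (Hop : ((Fin d → ℝ) → ℂ) → ((Fin d → ℝ) → ℂ))
    (hHop : ∀ f z, Hop f z = -(Sbar p / 2) *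
      ((∑ j ∈ Finset.univ.filter (fun j : Fin d => (j : ℕ) < d - 1),
          (p j * Bj j p)⁻¹ * pderiv' d j (pderiv' d j f) z)
        + p ⟨d - 1, by omega⟩ * (BC p)⁻¹ *
            pderiv' d ⟨d - 1, by omega⟩ (pderiv' d ⟨d - 1, by omega⟩ f) z)) :
    -(1 / 2) * ((Hop ut) 0 + (Hop (Hop (fun θ => ut θ * gbar θ))) 0 / 4) =
      (Sbar p * (∏ j ∈ Finset.univ.filter (fun j : Fin d => (j : ℕ) < d - 1), (1 + p j))
          / (1 - p ⟨d - 1, by omega⟩)) *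
      (1 / (AC p * p ⟨d - 1, by omega⟩ * (1 - p ⟨d - 1, by omega⟩))
        + ∑ j ∈ Finset.univ.filter (fun j : Fin d => (j : ℕ) < d - 1),
            (1 - p j) / (2 * p j * Bj j p) * (A' j p / AC p - B' j p / BC p)) := by
  obtain ⟨n, hn⟩ : ∃ n : Fin d, n = ⟨d - 1, by omega⟩ := ⟨_, rfl⟩
  obtain ⟨J, hJdef⟩ : ∃ J : Finset (Fin d),
    J = Finset.univ.filter (fun k : Fin d => (k : ℕ) < d - 1) := ⟨_, rfl⟩
  have hmem : ∀ j, j ∈ J ↔ (j : ℕ) < d - 1 := by intro j; simp [hJdef]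
  have hnv : (n : ℕ) = d - 1 := by rw [hn]
  simp only [← hn, ← hJdef] at *
  have hnJ : n ∉ J := by rw [hmem, hnv]; simp
  have hJ : insert n J = univ := by
    ext k
    simp only [Finset.mem_insert, hmem, Finset.mem_univ, iff_true]
    rw [Fin.ext_iff, hnv]
    have := k.2
    omega
  have mem : ∀ k, k = n ∨ k ∈ J := by
    intro k; rw [← Finset.mem_insert, hJ]; exact Finset.mem_univ k
  have hp0 : ∀ k, p k ≠ 0 := by
    intro k
    rcases mem k with h | h
    · rw [h]; exact hpd0
    · rcases hpj k ((hmem k).1 h) with h | h <;> rw [h] <;> norm_num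
  obtain ⟨a, ha⟩ : ∃ a : (Fin d → ℝ) → ℂ,
    a = fun θ => AC (fun k => p k * Complex.exp (Complex.I * (θ k : ℂ))) := ⟨_, rfl⟩
  obtain ⟨b, hb⟩ : ∃ b : (Fin d → ℝ) → ℂ,
    b = fun θ => BC (fun k => p k * Complex.exp (Complex.I * (θ k : ℂ))) := ⟨_, rfl⟩
  obtain ⟨q, hq⟩ : ∃ q : (Fin d → ℝ) → ℂ,
    q = fun θ => QC (fun k => p k * Complex.exp (Complex.I * (θ k : ℂ))) := ⟨_, rfl⟩
  obtain ⟨s, hs⟩ : ∃ s : (Fin d → ℝ) → ℂ,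
    s = fun θ => Sbar (fun k => p k * Complex.exp (Complex.I * (θ k : ℂ))) := ⟨_, rfl⟩
  obtain ⟨e, he⟩ : ∃ e : (Fin d → ℝ) → ℂ,
    e = fun θ => p n * Complex.exp (Complex.I * (θ n : ℂ)) := ⟨_, rfl⟩
  obtain ⟨ei, hei⟩ : ∃ ei : (Fin d → ℝ) → ℂ,
    ei = fun θ => (p n)⁻¹ * Complex.exp (-Complex.I * (θ n : ℂ)) := ⟨_, rfl⟩
  obtain ⟨P, hP⟩ : ∃ P : (Fin d → ℝ) → ℂ,
    P = fun θ => ∏ j ∈ J, (1 + p j * Complex.exp (Complex.I * (θ j : ℂ))) := ⟨_, rfl⟩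
  obtain ⟨F, hF⟩ : ∃ F : (Fin d → ℝ) → ℂ,
    F = fun θ => P θ * (b θ)⁻¹ * (1 - e θ)⁻¹ := ⟨_, rfl⟩
  have zp : (fun k => p k * Complex.exp (Complex.I * (((0 : Fin d → ℝ) k : ℝ) : ℂ))) = p := by
    funext k; simp
  have a0 : a 0 = AC p := by rw [ha]; simp only [zp]
  have b0 : b 0 = BC p := by rw [hb]; simp only [zp]
  have s0 : s 0 = Sbar p := by rw [hs]; simp only [zp]
  have e0 : e 0 = p n := by rw [he]; simp
  have ei0 : ei 0 = (p n)⁻¹ := by rw [hei]; simp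
  have P0 : P 0 = ∏ j ∈ J, (1 + p j) := by rw [hP]; simp
  obtain ⟨as, an⟩ := laurent_facts n J hnJ _ w p AC hAC
  obtain ⟨bs, bn⟩ := laurent_facts n J hnJ _ w p BC hBC
  obtain ⟨qs, qn⟩ := laurent_facts n J hnJ _ w p QC hQC
  rw [← ha] at as an
  rw [← hb] at bs bn
  rw [← hq] at qs qn
  have es : ContDiff ℝ (⊤ : ℕ∞) e := by rw [he]; exact sm_exp n _ _
  have eis : ContDiff ℝ (⊤ : ℕ∞) ei := by rw [hei]; exact sm_exp n _ _
  have Ps : ContDiff ℝ (⊤ : ℕ∞) P := by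
    rw [hP]
    exact contDiff_prod (fun k _ => contDiff_const.add (sm_exp k _ _))
  have Pn : pderiv' d n P = fun _ => 0 := by
    apply pd_indep
    intro x t
    rw [hP]
    refine Finset.prod_congr rfl (fun k hk => ?_)
    have : k ≠ n := fun h => hnJ (h ▸ hk)
    rw [Function.update_of_ne this]
  have hpd1' : 1 - p n ≠ 0 := sub_ne_zero.mpr (Ne.symm hpd1)
  -- the neighbourhood
  obtain ⟨V, hV⟩ : ∃ V : Set (Fin d → ℝ), V = U ∩ ({x | b x ≠ 0} ∩ {x | 1 - e x ≠ 0}) := ⟨_, rfl⟩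
  have hVo : IsOpen V := by
    rw [hV]
    refine hU.inter (IsOpen.inter ?_ ?_)
    · exact isOpen_ne_fun bs.continuous continuous_const
    · exact isOpen_ne_fun (continuous_const.sub es.continuous) continuous_const
  have hV0 : (0 : Fin d → ℝ) ∈ V := by
    rw [hV]
    refine ⟨h0, ?_, ?_⟩
    · simp only [Set.mem_ofPred_eq, b0]; exact hpB
    · simp only [Set.mem_ofPred_eq, e0]; exact hpd1'
  have hVU : V ⊆ U := by rw [hV]; exact Set.inter_subset_left
  have Vb : ∀ x ∈ V, b x ≠ 0 := by intro x hx; rw [hV] at hx; exact hx.2.1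
  have Ve : ∀ x ∈ V, 1 - e x ≠ 0 := by intro x hx; rw [hV] at hx; exact hx.2.2
  have Fs : ContDiffOn ℝ (⊤ : ℕ∞) F V := by
    rw [hF]
    exact (Ps.contDiffOn.mul (bs.contDiffOn.inv Vb)).mul
      ((contDiffOn_const.sub es.contDiffOn).inv Ve)
  obtain ⟨c, hc⟩ : ∃ c : Fin d → ℂ, c = fun k => -(Sbar p / 2) *
    (if k = n then p n * (BC p)⁻¹ else (p k * Bj k p)⁻¹) := ⟨_, rfl⟩
  have hHop' : ∀ f, Hop f = fun z => ∑ k, c k * pderiv' d k (pderiv' d k f) z := by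
    intro f
    funext z
    rw [hHop, ← hJ, Finset.sum_insert hnJ, hc, mul_add, Finset.mul_sum, add_comm]
    simp only [if_true]
    congr 1
    · ring
    · refine Finset.sum_congr rfl (fun k hk => ?_)
      have : k ≠ n := fun h => hnJ (h ▸ hk)
      rw [if_neg this]; ring
  have hC := core n J hnJ hJ hVo hV0 (a := a) (b := b) (q := q) (e := e) (ei := ei) (P := P) (F := F)
    (g := gt) (gb := gbar) as.contDiffOn bs.contDiffOn qs.contDiffOn es.contDiffOn eis.contDiffOn
    Fs (hgtsm.mono hVU) an bn qn Pn
    (by rw [he]; exact pd_exp n _ _) (by rw [hei]; exact pd_exp n _ _)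
    (by
      intro j hj x _
      have hne : n ≠ j := fun h => hnJ (h ▸ hj)
      rw [pd_indep (j := j)]
      intro x t; rw [he]; simp only [Function.update_of_ne hne])
    (by
      intro j hj x _
      have hne : n ≠ j := fun h => hnJ (h ▸ hj)
      rw [pd_indep (j := j)]
      intro x t; rw [hei]; simp only [Function.update_of_ne hne])
    (by
      intro j hj
      have hj' := (hmem j).1 hj
      rw [ha]
      exact even_facts j p hp0 (hpj j hj') AC (A' j) (A'' j) (fun z c => (hA'ind j hj' z c).1)
        (fun z c => (hA''ind j hj' z c).1) (hAdec j hj'))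
    (by
      intro j hj
      have hj' := (hmem j).1 hj
      rw [hb]
      exact even_facts j p hp0 (hpj j hj') BC (B' j) (B'' j) (fun z c => (hB'ind j hj' z c).1)
        (fun z c => (hB''ind j hj' z c).1) (hBdec j hj'))
    s
    (by
      funext x
      rw [hs, he, ha, hq, hei, hb]
      simp only
      rw [hSbar, mul_inv, ← Complex.exp_neg, neg_mul])
    (by
      intro j hj
      have hj' := (hmem j).1 hj
      rw [hs]
      exact even_facts j p hp0 (hpj j hj') Sbar (Bj j) (Qj j) (hBjind j hj') (hQjind j hj')
        (hBjQj j hj'))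
    (by rw [e0, ei0]; exact mul_inv_cancel₀ hpd0)
    (by rw [e0, a0, b0, hpd]; field_simp)
    (by rw [b0]; exact hpB) (by rw [e0]; exact hpd1') (by rw [s0]; exact hpS)
    (by
      intro x hx
      rw [hF]
      have h1 := Vb x hx
      have h2 := Ve x hx
      simp only
      field_simp)
    ut
    (by
      intro x hx
      have h1 := Vb x hx
      have hee : e x * e x = p n ^ 2 * Complex.exp (2 * Complex.I * (x n : ℂ)) := by
        rw [he]; simp only
        rw [show 2 * Complex.I * (x n : ℂ) = Complex.I * (x n : ℂ) + Complex.I * (x n : ℂ) by ring,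
          Complex.exp_add]
        ring
      have hax : AC (fun k => p k * Complex.exp (Complex.I * (x k : ℂ))) = a x := by rw [ha]
      have hbx : BC (fun k => p k * Complex.exp (Complex.I * (x k : ℂ))) = b x := by rw [hb]
      have hex : p n * Complex.exp (Complex.I * (x n : ℂ)) = e x := by rw [he]
      have hPx : ∏ j ∈ J, (1 + p j * Complex.exp (Complex.I * (x j : ℂ))) = P x := by rw [hP]
      rw [hut, hax, hbx, hex, hPx, ← hee, hF]
      have : 1 - e x * e x * a x / b x = (b x - e x * e x * a x) * (b x)⁻¹ := by
        field_simp
      rw [this]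
      ring)
    (Sbar p)
    (by
      intro x hx
      rw [hs]
      exact hgt x (hVU hx))
    hgt0 hgbar c
    (by rw [hc, s0, e0, b0]; simp)
  rw [hHop', hHop', hHop', hC]
  have hz : (∏ j ∈ J, (1 + p j)) * ∑ j ∈ J, (1 - p j) / (2 * p j * Bj j p) *
      (A' j p / AC p - B' j p / BC p) = 0 := by
    rw [Finset.mul_sum]
    refine Finset.sum_eq_zero (fun j hj => ?_)
    rcases hpj j ((hmem j).1 hj) with h | h
    · rw [h]; simp
    · rw [Finset.prod_eq_zero hj (by rw [h]; ring), zero_mul]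
  have F0 : F 0 = (∏ j ∈ J, (1 + p j)) * (BC p)⁻¹ * (1 - p n)⁻¹ := by
    rw [hF]; simp only [P0, b0, e0]
  have hBA : BC p = p n ^ 2 * AC p := by rw [hpd]; field_simp
  rw [s0, e0, F0, div_mul_eq_mul_div, mul_add, mul_assoc (Sbar p) _ (∑ j ∈ J, _), hz, hBA]
  field_simp
  ring
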